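/- Let F : ℝ^n ⇒ ℝ^p be a nearly convex set-valued mapping and let Θ ⊆ ℝ^p be a nearly convex set. Suppose ri(rge F) ∩ ri Θ ≠ ∅. Define F₀(x) = ri F(x) for x ∈ ℝ^n. Then ri(F⁻¹(Θ)) = ri(dom F) ∩ F₀⁻¹(ri Θ), where for a set-valued mapping H and a set S, H⁻¹(S) = {x | H(x) ∩ S ≠ ∅}. -/

import Mathlib

/-!
`F⁻¹(Θ)` is the first projection of `gph F ∩ (E × Θ)`. For nearly convex sets in finite dimensions,
`ri` commutes with products, with affine images, and with intersections as soon as the relative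
interiors meet; here this last condition is `ri (rge F) ∩ ri Θ ≠ ∅`, read through the second
projection of the graph. It remains to identify `ri (gph F)`: cutting the graph with the vertical
subspace `{x} × G` shows that its fibre over `x ∈ ri (dom F)` is `ri (F x)`.

The `ri` calculus rests on two facts: the open segment from a point of `ri s` to a point of
`closure s` stays in `ri s`, and a segment of `s` ending in `ri s` can be prolonged inside `s`.
-/

open Set Metric

noncomputable section

/-- A set is *nearly convex* if it lies between a convex set and its closure. -/
def NearlyConvex {E : Type*} [NormedAddCommGroup E] [NormedSpace ℝ E] (s : Set E) : Prop :=
  ∃ C : Set E, Convex ℝ C ∧ C ⊆ s ∧ s ⊆ closure C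

/-- The *relative interior* of a set: points `a ∈ s` admitting `δ > 0` with
`B(a,δ) ∩ aff s ⊆ s`. -/
def ri {E : Type*} [NormedAddCommGroup E] [NormedSpace ℝ E] (s : Set E) : Set E :=
  {a | a ∈ s ∧ ∃ δ > 0, Metric.ball a δ ∩ (affineSpan ℝ s : Set E) ⊆ s}

/-- The graph of a set-valued mapping. -/
def gph {E P : Type*} (F : E → Set P) : Set (E × P) := {q | q.2 ∈ F q.1}

/-- The domain of a set-valued mapping. -/
def domSV {E P : Type*} (F : E → Set P) : Set E := {x | (F x).Nonempty}

open Filter Topology AffineMap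

lemma lineMap_lineMap_of_mul_eq_one {k V P : Type*} [Ring k] [AddCommGroup V] [Module k V]
    [AddTorsor V P] (p q : P) {c d : k} (h : d * c = 1) : lineMap p (lineMap p q c) d = q := by
  rw [lineMap_lineMap_right, h, lineMap_apply_one]

section NormedSpace

variable {E G : Type*} [NormedAddCommGroup E] [NormedSpace ℝ E]
  [NormedAddCommGroup G] [NormedSpace ℝ G] {s t : Set E} {a b : E}

lemma mem_ri_iff_mem_nhdsWithin : a ∈ ri s ↔ a ∈ s ∧ s ∈ 𝓝[affineSpan ℝ s] a :=
  and_congr_right' mem_nhdsWithin_iff.symm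

lemma ri_subset : ri s ⊆ s := fun _ h => h.1

lemma ri_eq_intrinsicInterior (s : Set E) : ri s = intrinsicInterior ℝ s := by
  ext a
  rw [mem_ri_iff_mem_nhdsWithin, mem_intrinsicInterior]
  constructor
  · rintro ⟨ha, hs⟩
    exact ⟨⟨a, subset_affineSpan ℝ s ha⟩,
      mem_interior_iff_mem_nhds.2 (preimage_coe_mem_nhds_subtype.2 hs), rfl⟩
  · rintro ⟨a, ha, rfl⟩
    have has : a ∈ ((↑) ⁻¹' s : Set (affineSpan ℝ s)) := interior_subset ha
    exact ⟨has, preimage_coe_mem_nhds_subtype.1 (mem_interior_iff_mem_nhds.1 ha)⟩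

lemma ri_univ : ri (univ : Set E) = univ :=
  eq_univ_of_forall fun _ => ⟨mem_univ _, 1, one_pos, subset_univ _⟩

lemma ri_singleton (a : E) : ri {a} = {a} := by
  rw [ri_eq_intrinsicInterior, intrinsicInterior_singleton]

lemma ri_prod (s : Set E) (u : Set G) : ri (s ×ˢ u) = ri s ×ˢ ri u := by
  simp only [ri_eq_intrinsicInterior, intrinsicInterior_prod_eq]

lemma ri_inter_ri_subset : ri s ∩ ri t ⊆ ri (s ∩ t) := by
  rintro a ⟨has, hat⟩
  rw [mem_ri_iff_mem_nhdsWithin] at has hat ⊢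
  exact ⟨⟨has.1, hat.1⟩, inter_mem
    (nhdsWithin_mono a (affineSpan_mono ℝ inter_subset_left) has.2)
    (nhdsWithin_mono a (affineSpan_mono ℝ inter_subset_right) hat.2)⟩

lemma exists_mem_openSegment_of_mem_ri (ha : a ∈ ri s) (hb : b ∈ s) :
    ∃ z ∈ s, a ∈ openSegment ℝ b z := by
  obtain ⟨has, hs⟩ := mem_ri_iff_mem_nhdsWithin.1 ha
  have hray : Tendsto (lineMap b a : ℝ → E) (𝓝[>] 1) (𝓝[affineSpan ℝ s] a) := by
    refine tendsto_nhdsWithin_iff.2 ⟨?_, .of_forall fun r =>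
      lineMap_mem r (subset_affineSpan ℝ s hb) (subset_affineSpan ℝ s has)⟩
    exact (lineMap_continuous.tendsto' 1 a (lineMap_apply_one b a)).mono_left inf_le_left
  obtain ⟨r, hrs, hr : 1 < r⟩ := ((hray.eventually hs).and self_mem_nhdsWithin).exists
  refine ⟨lineMap b a r, hrs, ?_⟩
  have ha_eq : lineMap b (lineMap b a r) r⁻¹ = a :=
    lineMap_lineMap_of_mul_eq_one b a (inv_mul_cancel₀ (by positivity))
  have hmem := lineMap_mem_openSegment ℝ b (lineMap b a r)
    ⟨inv_pos.2 (one_pos.trans hr), inv_lt_one_of_one_lt₀ hr⟩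
  rwa [ha_eq] at hmem

namespace NearlyConvex

lemma of_convex (hs : Convex ℝ s) : NearlyConvex s :=
  ⟨s, hs, Subset.rfl, subset_closure⟩

lemma prod {u : Set G} (hs : NearlyConvex s) (hu : NearlyConvex u) : NearlyConvex (s ×ˢ u) := by
  obtain ⟨C, hC, hCs, hsC⟩ := hs
  obtain ⟨D, hD, hDu, huD⟩ := hu
  refine ⟨C ×ˢ D, hC.prod hD, prod_mono hCs hDu, ?_⟩
  rw [closure_prod_eq]
  exact prod_mono hsC huD

lemma image (hs : NearlyConvex s) {f : E →ᵃ[ℝ] G} (hf : Continuous f) :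
    NearlyConvex (f '' s) := by
  obtain ⟨C, hC, hCs, hsC⟩ := hs
  exact ⟨f '' C, hC.affine_image f, image_mono hCs,
    (image_mono hsC).trans (image_closure_subset_closure_image hf)⟩

end NearlyConvex

end NormedSpace

section FiniteDimensional

variable {E G : Type*} [NormedAddCommGroup E] [NormedSpace ℝ E] [FiniteDimensional ℝ E]
  [NormedAddCommGroup G] [NormedSpace ℝ G] [FiniteDimensional ℝ G] {s t C : Set E} {x z : E}

lemma affineSpan_closure (s : Set E) : affineSpan ℝ (closure s) = affineSpan ℝ s := by
  rw [← intrinsicClosure_eq_closure ℝ s, affineSpan_intrinsicClosure]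

lemma openSegment_subset_ri_of_convex (hC : Convex ℝ C) (hx : x ∈ ri C) (hz : z ∈ closure C) :
    openSegment ℝ x z ⊆ ri C := by
  rw [openSegment_symm, openSegment_eq_image_lineMap]
  rintro _ ⟨r, ⟨hr0, hr1⟩, rfl⟩
  obtain ⟨hxC, hCx⟩ := mem_ri_iff_mem_nhdsWithin.1 hx
  set A := affineSpan ℝ C
  set y := lineMap z x r
  have hzA : z ∈ A := (affineSpan_closure C).le (subset_affineSpan ℝ _ hz)
  have hyA : y ∈ A := lineMap_mem r hzA (subset_affineSpan ℝ C hxC)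
  -- A point `w` near `y` is the convex combination with weight `r` of some `z' ∈ C` near `z` and of
  -- the prolongation `lineMap z' w r⁻¹`, which is near `x` and hence in `C`.
  have hprolong : Tendsto (fun q : E × E => lineMap q.1 q.2 r⁻¹) (𝓝[C] z ×ˢ 𝓝[A] y) (𝓝[A] x) := by
    refine tendsto_nhdsWithin_iff.2 ⟨?_, ?_⟩
    · rw [← lineMap_lineMap_of_mul_eq_one z x (inv_mul_cancel₀ hr0.ne')]
      exact (tendsto_fst.mono_right inf_le_left).lineMap (tendsto_snd.mono_right inf_le_left)
        tendsto_const_nhds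
    · filter_upwards [prod_mem_prod self_mem_nhdsWithin self_mem_nhdsWithin] with q hq
      exact lineMap_mem _ (subset_affineSpan ℝ C hq.1) hq.2
  have hmem : ∀ᶠ w in 𝓝[A] y, w ∈ C := by
    have : (𝓝[C] z).NeBot := mem_closure_iff_nhdsWithin_neBot.1 hz
    obtain ⟨z', hz', hz'C⟩ :=
      ((hprolong.eventually hCx).curry.and self_mem_nhdsWithin).exists
    filter_upwards [hz'] with w hw
    have hw_eq : lineMap z' (lineMap z' w r⁻¹) r = w :=
      lineMap_lineMap_of_mul_eq_one z' w (mul_inv_cancel₀ hr0.ne')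
    exact hw_eq ▸ hC.lineMap_mem hz'C hw ⟨hr0.le, hr1.le⟩
  exact mem_ri_iff_mem_nhdsWithin.2 ⟨hmem.self_of_nhdsWithin hyA, hmem⟩

lemma ri_nonempty_of_convex (hC : Convex ℝ C) (hne : C.Nonempty) : (ri C).Nonempty :=
  ri_eq_intrinsicInterior C ▸ hne.intrinsicInterior hC

lemma ri_eq_of_subset_closure (hC : Convex ℝ C) (hCs : C ⊆ s) (hsC : s ⊆ closure C) :
    ri s = ri C := by
  apply Subset.antisymm
  · intro a ha
    obtain ⟨b, hb⟩ := ri_nonempty_of_convex hC (closure_nonempty_iff.1 ⟨a, hsC (ri_subset ha)⟩)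
    obtain ⟨z, hz, haz⟩ := exists_mem_openSegment_of_mem_ri ha (hCs (ri_subset hb))
    exact openSegment_subset_ri_of_convex hC hb (hsC hz) haz
  · intro a ha
    have hspan : affineSpan ℝ s = affineSpan ℝ C :=
      ((affineSpan_mono ℝ hsC).trans_eq (affineSpan_closure C)).antisymm (affineSpan_mono ℝ hCs)
    rw [mem_ri_iff_mem_nhdsWithin] at ha ⊢
    exact ⟨hCs ha.1, hspan ▸ mem_of_superset ha.2 hCs⟩

namespace NearlyConvex

lemma openSegment_subset_ri (hs : NearlyConvex s) (hx : x ∈ ri s) (hz : z ∈ closure s) :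
    openSegment ℝ x z ⊆ ri s := by
  obtain ⟨C, hC, hCs, hsC⟩ := hs
  rw [ri_eq_of_subset_closure hC hCs hsC] at hx ⊢
  exact openSegment_subset_ri_of_convex hC hx (closure_minimal hsC isClosed_closure hz)

lemma ri_nonempty (hs : NearlyConvex s) (hne : s.Nonempty) : (ri s).Nonempty := by
  obtain ⟨C, hC, hCs, hsC⟩ := hs
  rw [ri_eq_of_subset_closure hC hCs hsC]
  exact ri_nonempty_of_convex hC (closure_nonempty_iff.1 (hne.mono hsC))

lemma convex_ri (hs : NearlyConvex s) : Convex ℝ (ri s) :=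
  convex_iff_openSegment_subset.2 fun _ hx _ hy =>
    hs.openSegment_subset_ri hx (subset_closure (ri_subset hy))

lemma ri_image (hs : NearlyConvex s) (f : E →ᵃ[ℝ] G) : ri (f '' s) = f '' ri s := by
  have hfs : NearlyConvex (f '' s) := hs.image f.continuous_of_finiteDimensional
  apply Subset.antisymm
  · intro y hy
    obtain ⟨x, hx⟩ := hs.ri_nonempty (image_nonempty.1 ⟨y, ri_subset hy⟩)
    obtain ⟨_, ⟨z, hz, rfl⟩, hyz⟩ :=
      exists_mem_openSegment_of_mem_ri hy (mem_image_of_mem f (ri_subset hx))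
    rw [← image_openSegment] at hyz
    exact image_mono (hs.openSegment_subset_ri hx (subset_closure hz)) hyz
  · rintro _ ⟨a, ha, rfl⟩
    obtain ⟨_, hb⟩ := hfs.ri_nonempty ⟨f a, mem_image_of_mem f (ri_subset ha)⟩
    obtain ⟨x, hx, rfl⟩ := ri_subset hb
    obtain ⟨z, hz, haz⟩ := exists_mem_openSegment_of_mem_ri ha hx
    apply hfs.openSegment_subset_ri hb (subset_closure (mem_image_of_mem f hz))
    exact image_openSegment ℝ f x z ▸ mem_image_of_mem f haz

lemma inter (hs : NearlyConvex s) (ht : NearlyConvex t) (hst : (ri s ∩ ri t).Nonempty) :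
    NearlyConvex (s ∩ t) := by
  obtain ⟨b, hbs, hbt⟩ := hst
  refine ⟨ri s ∩ ri t, hs.convex_ri.inter ht.convex_ri,
    inter_subset_inter ri_subset ri_subset, fun x hx => ?_⟩
  have hseg : openSegment ℝ b x ⊆ ri s ∩ ri t :=
    subset_inter (hs.openSegment_subset_ri hbs (subset_closure hx.1))
      (ht.openSegment_subset_ri hbt (subset_closure hx.2))
  exact closure_mono hseg (segment_subset_closure_openSegment (right_mem_segment ℝ b x))

lemma ri_inter (hs : NearlyConvex s) (ht : NearlyConvex t) (hst : (ri s ∩ ri t).Nonempty) :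
    ri (s ∩ t) = ri s ∩ ri t := by
  refine Subset.antisymm (fun a ha => ?_) ri_inter_ri_subset
  obtain ⟨b, hbs, hbt⟩ := hst
  obtain ⟨z, hz, haz⟩ := exists_mem_openSegment_of_mem_ri ha ⟨ri_subset hbs, ri_subset hbt⟩
  exact ⟨hs.openSegment_subset_ri hbs (subset_closure hz.1) haz,
    ht.openSegment_subset_ri hbt (subset_closure hz.2) haz⟩

end NearlyConvex

end FiniteDimensional

section SetValued

variable {E G : Type*} [NormedAddCommGroup E] [NormedSpace ℝ E] [FiniteDimensional ℝ E]
  [NormedAddCommGroup G] [NormedSpace ℝ G] [FiniteDimensional ℝ G] {F : E → Set G} {Θ : Set G}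

namespace NearlyConvex

lemma ri_domSV (hF : NearlyConvex (gph F)) : ri (domSV F) = Prod.fst '' ri (gph F) := by
  have hdom : domSV F = Prod.fst '' gph F := by
    ext x; simp [gph, domSV, Set.Nonempty]
  rw [hdom]
  exact hF.ri_image AffineMap.fst

lemma ri_iUnion (hF : NearlyConvex (gph F)) :
    ri (⋃ x, F x) = Prod.snd '' ri (gph F) := by
  have hrge : ⋃ x, F x = Prod.snd '' gph F := by
    ext y; simp [gph]
  rw [hrge]
  exact hF.ri_image AffineMap.snd

lemma mem_ri_gph_iff {x : E} {y : G} (hF : NearlyConvex (gph F)) :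
    (x, y) ∈ ri (gph F) ↔ x ∈ ri (domSV F) ∧ y ∈ ri (F x) := by
  have hx_of_mem : (x, y) ∈ ri (gph F) → x ∈ ri (domSV F) := fun h =>
    hF.ri_domSV ▸ mem_image_of_mem Prod.fst h
  rw [← and_iff_right_of_imp hx_of_mem]
  refine and_congr_right fun hx => ?_
  have hvert : NearlyConvex (({x} : Set E) ×ˢ (univ : Set G)) :=
    .of_convex ((convex_singleton x).prod convex_univ)
  have hri_vert : ri (({x} : Set E) ×ˢ (univ : Set G)) = {x} ×ˢ univ := by
    rw [ri_prod, ri_singleton, ri_univ]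
  have hmeet : (ri (gph F) ∩ ri (({x} : Set E) ×ˢ (univ : Set G))).Nonempty := by
    rw [hF.ri_domSV] at hx
    obtain ⟨q, hq, hqx⟩ := hx
    exact ⟨q, hq, hri_vert.ge ⟨hqx, mem_univ _⟩⟩
  have hfibre : gph F ∩ {x} ×ˢ univ = {x} ×ˢ F x := by
    grind [gph]
  have hri := hF.ri_inter hvert hmeet
  rw [hfibre, ri_prod, ri_singleton, hri_vert] at hri
  simpa using (Set.ext_iff.1 hri (x, y)).symm

end NearlyConvex

theorem ri_inverse_image_of_nearlyConvex_general (hF : NearlyConvex (gph F)) (hΘ : NearlyConvex Θ)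
    (hqc : (ri (⋃ x, F x) ∩ ri Θ).Nonempty) :
    ri {x | (F x ∩ Θ).Nonempty} =
      ri (domSV F) ∩ {x | (ri (F x) ∩ ri Θ).Nonempty} := by
  have hstrip : NearlyConvex ((univ : Set E) ×ˢ Θ) := (NearlyConvex.of_convex convex_univ).prod hΘ
  have hri_strip : ri ((univ : Set E) ×ˢ Θ) = univ ×ˢ ri Θ := by rw [ri_prod, ri_univ]
  have hmeet : (ri (gph F) ∩ ri ((univ : Set E) ×ˢ Θ)).Nonempty := by
    rw [hF.ri_iUnion] at hqc
    obtain ⟨_, ⟨q, hq, rfl⟩, hqΘ⟩ := hqc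
    exact ⟨q, hq, hri_strip.ge ⟨mem_univ _, hqΘ⟩⟩
  have hproj : {x | (F x ∩ Θ).Nonempty} = Prod.fst '' (gph F ∩ univ ×ˢ Θ) := by
    ext x; simp [gph, Set.Nonempty]
  calc
    ri {x | (F x ∩ Θ).Nonempty} = Prod.fst '' ri (gph F ∩ univ ×ˢ Θ) := by
      rw [hproj]
      exact (hF.inter hstrip hmeet).ri_image AffineMap.fst
    _ = Prod.fst '' (ri (gph F) ∩ univ ×ˢ ri Θ) := by
      rw [hF.ri_inter hstrip hmeet, hri_strip]
    _ = ri (domSV F) ∩ {x | (ri (F x) ∩ ri Θ).Nonempty} := by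
      ext x
      simp [hF.mem_ri_gph_iff, Set.Nonempty, and_assoc]

end SetValued

theorem ri_inverse_image_of_nearlyConvex (n p : ℕ)
    (F : EuclideanSpace ℝ (Fin n) → Set (EuclideanSpace ℝ (Fin p)))
    (Θ : Set (EuclideanSpace ℝ (Fin p)))
    (hF : NearlyConvex (gph F)) (hΘ : NearlyConvex Θ)
    (hqc : (ri (⋃ x, F x) ∩ ri Θ).Nonempty) :
    ri {x | (F x ∩ Θ).Nonempty} =
      ri (domSV F) ∩ {x | (ri (F x) ∩ ri Θ).Nonempty} :=
  ri_inverse_image_of_nearlyConvex_general hF hΘ hqc
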